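/- Let A be an abelian group that is generated by r elements, and let d ≥ r + 1. Then for any two d-tuples a = (a₁, …, a_d) and b = (b₁, …, b_d) of elements of A, each of which generates A, there exists a k-algebra isomorphism Φ of K_d = Frac(k[X₁, …, X_d]) satisfying Φ(g ·_a x) = g ·_b Φ(x) for all g ∈ Hom(A, kˣ) and x ∈ K_d. (Any two faithful d-dimensional linear representations of a diagonalizable group of rank r are birationally equivalent when d ≥ r + 1.) -/

import Mathlib

/-!
Write `a ~ b` for tuples in `A` related by elementary operations `aᵢ ↦ aᵢ + n • aⱼ` with `i ≠ j`
and `n : ℤ`.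

An elementary operation changes the representation only birationally: the monomial automorphism
`Xᵢ ↦ Xᵢ * Xⱼ ^ (-n)` of `K_d`, which fixes the other variables, intertwines the two actions
(`intertwines_of_step`). So it suffices that generating `d`-tuples of `A` are all equivalent once
`d` exceeds the number of generators `r`. This is `nielsen_of_support`: every generating tuple `a`
is equivalent to `s`, padded by zeros.

That lemma is proved by induction on the support of `s`. Let `x = s p` be one of the generators. By
induction the images of `a` and `s` in `A / ⟨x⟩` are equivalent, and the operations lift, so
`a ~ c` with `c ≡ s` modulo `x`. Outside the support of `s` there is another position `q`, and both
`c p` and `c q` are multiples of `x`; the Euclidean algorithm makes the entry at `q` zero. Since the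
tuple still generates `A`, a combination of the other entries can be added there to turn the zero
into `x`. Subtracting multiples of this entry from the others gives `s` with the entries at `p`
and `q` exchanged, and two more operations put them in place.
-/

/-! ### Elementary operations on tuples -/

/-- `b` arises from `a` by adding an integer multiple of one entry to a different entry. -/
def ElemStep {ι A : Type*} [DecidableEq ι] [AddCommGroup A] (a b : ι → A) : Prop :=
  ∃ i j, i ≠ j ∧ ∃ n : ℤ, b = Function.update a i (a i + n • a j)

/-- Nielsen equivalence of tuples: the preorder generated by `ElemStep`, which is symmetric
(`Nielsen.symm`). -/
def Nielsen {ι A : Type*} [DecidableEq ι] [AddCommGroup A] : (ι → A) → (ι → A) → Prop :=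
  Relation.ReflTransGen ElemStep

section Tuples

variable {ι A : Type*} [DecidableEq ι] [AddCommGroup A]

lemma ElemStep.symm {a b : ι → A} (h : ElemStep a b) : ElemStep b a := by
  obtain ⟨i, j, hij, n, rfl⟩ := h
  refine ⟨i, j, hij, -n, ?_⟩
  simp [Function.update_of_ne hij.symm]

lemma Nielsen.symm {a b : ι → A} (h : Nielsen a b) : Nielsen b a :=
  haveI : Std.Symm (ElemStep : (ι → A) → (ι → A) → Prop) := ⟨fun _ _ => ElemStep.symm⟩
  Relation.ReflTransGen.stdSymm.symm _ _ h

lemma Nielsen.refl (a : ι → A) : Nielsen a a := Relation.ReflTransGen.refl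

lemma Nielsen.trans {a b c : ι → A} (h : Nielsen a b) (h' : Nielsen b c) : Nielsen a c :=
  Relation.ReflTransGen.trans h h'

lemma Nielsen.step (a : ι → A) {i j : ι} (hij : i ≠ j) (n : ℤ) :
    Nielsen a (Function.update a i (a i + n • a j)) :=
  Relation.ReflTransGen.single ⟨i, j, hij, n, rfl⟩

lemma ElemStep.closure_le {a b : ι → A} (h : ElemStep a b) :
    AddSubgroup.closure (Set.range b) ≤ AddSubgroup.closure (Set.range a) := by
  obtain ⟨i, j, hij, n, rfl⟩ := h
  rw [AddSubgroup.closure_le]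
  rintro _ ⟨l, rfl⟩
  have hm : ∀ t, a t ∈ AddSubgroup.closure (Set.range a) :=
    fun t => AddSubgroup.subset_closure ⟨t, rfl⟩
  by_cases hl : l = i
  · subst hl
    simpa using add_mem (hm l) (AddSubgroup.zsmul_mem _ (hm j) n)
  · simpa [Function.update_of_ne hl] using hm l

lemma Nielsen.closure_eq_top {a b : ι → A} (h : Nielsen a b)
    (ha : AddSubgroup.closure (Set.range a) = ⊤) :
    AddSubgroup.closure (Set.range b) = ⊤ := by
  induction h with
  | refl => exact ha
  | tail _ h ih => exact top_le_iff.mp (ih ▸ h.symm.closure_le)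

lemma Nielsen.lift {B : Type*} [AddCommGroup B] (f : A →+ B) {a : ι → A} {b : ι → B}
    (h : Nielsen (fun i => f (a i)) b) : ∃ c, Nielsen a c ∧ (fun i => f (c i)) = b := by
  induction h with
  | refl => exact ⟨a, Nielsen.refl a, rfl⟩
  | tail _ h ih =>
    obtain ⟨c, hc, rfl⟩ := ih
    obtain ⟨i, j, hij, n, rfl⟩ := h
    refine ⟨_, hc.trans (Nielsen.step c hij n), ?_⟩
    funext l
    by_cases hl : l = i
    · subst hl; simp
    · simp [Function.update_of_ne hl]

lemma Nielsen.add_sum (a : ι → A) (q : ι) (e : ι → ℤ) (T : Finset ι) (hq : q ∉ T) :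
    Nielsen a (Function.update a q (a q + ∑ t ∈ T, e t • a t)) := by
  induction T using Finset.induction_on with
  | empty => simpa using Nielsen.refl a
  | insert t T ht ih =>
    have hqt : q ≠ t := fun h => hq (by simp [h])
    refine (ih fun h => hq (Finset.mem_insert_of_mem h)).trans ?_
    convert Nielsen.step _ hqt (e t) using 1
    simp [Finset.sum_insert ht, Function.update_of_ne hqt.symm]
    abel_nf

lemma Nielsen.add_multiples (a : ι → A) (q : ι) (e : ι → ℤ) (T : Finset ι) (hq : q ∉ T) :
    Nielsen a (fun i => if i ∈ T then a i + e i • a q else a i) := by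
  induction T using Finset.induction_on with
  | empty => simpa using Nielsen.refl a
  | insert t T ht ih =>
    have hqt : t ≠ q := fun h => hq (by simp [h])
    have hqT : q ∉ T := fun h => hq (Finset.mem_insert_of_mem h)
    refine (ih hqT).trans ?_
    convert Nielsen.step _ hqt (e t) using 1
    funext l
    by_cases hl : l = t
    · subst hl; simp [ht, hqT]
    · simp [hl]

/-- The Euclidean algorithm: if the entries at `p` and `q` are multiples of `x`, the entry at `q`
can be made zero. -/
lemma Nielsen.euclid {p q : ι} (hpq : p ≠ q) (x : A) (N : ℕ) :
    ∀ (m n : ℤ) (_ : n.natAbs ≤ N) (c : ι → A) (_ : c p = m • x) (_ : c q = n • x),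
      ∃ c', Nielsen c c' ∧ c' q = 0 ∧ (∃ m' : ℤ, c' p = m' • x) ∧
        ∀ i, i ≠ p → i ≠ q → c' i = c i := by
  induction N with
  | zero =>
    intro m n hn c hp hq
    have : n = 0 := by omega
    exact ⟨c, Nielsen.refl c, by simp [hq, this], ⟨m, hp⟩, fun _ _ _ => rfl⟩
  | succ N ih =>
    intro m n hn c hp hq
    by_cases hn0 : n = 0
    · exact ⟨c, Nielsen.refl c, by simp [hq, hn0], ⟨m, hp⟩, fun _ _ _ => rfl⟩
    -- Replace `(m, n)` by `(n, -(m % n))`: reduce `p`, then send `(u, v)` to `(v, -u)` by way of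
    -- `(u + v, v)` and `(u + v, -u)`. The reduction and the first of these steps are merged.
    let c₁ := Function.update c p (c p + (1 - m / n) • c q)
    let c₂ := Function.update c₁ q (c₁ q + (-1 : ℤ) • c₁ p)
    let c₃ := Function.update c₂ p (c₂ p + (1 : ℤ) • c₂ q)
    have h₁ : Nielsen c c₃ := ((Nielsen.step c hpq _).trans (Nielsen.step c₁ hpq.symm _)).trans
      (Nielsen.step c₂ hpq _)
    have hmod : m - m / n * n = m % n := by
      have := Int.emod_add_mul_ediv m n
      linarith
    have hp₁ : c₁ p = (m % n + n) • x := by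
      simp only [c₁, Function.update_self, hp, hq, smul_smul, ← add_smul, ← hmod]
      congr 1; ring
    have hq₁ : c₁ q = n • x := by simp [c₁, hpq.symm, hq]
    have hp₂ : c₂ p = (m % n + n) • x := by simp [c₂, hpq, hp₁]
    have hq₂ : c₂ q = (-(m % n)) • x := by
      simp only [c₂, Function.update_self, hp₁, hq₁, smul_smul, ← add_smul]
      congr 1; ring
    have hp₃ : c₃ p = n • x := by
      simp only [c₃, Function.update_self, hp₂, hq₂, smul_smul, ← add_smul]
      congr 1; ring
    have hq₃ : c₃ q = (-(m % n)) • x := by simp [c₃, hpq.symm, hq₂]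
    have hlt : (-(m % n)).natAbs ≤ N := by
      have h1 := Int.emod_nonneg m hn0
      have h2 := Int.emod_lt_abs m hn0
      rw [Int.abs_eq_natAbs] at h2
      omega
    obtain ⟨c', h, h0, hm', hrest⟩ := ih _ _ hlt c₃ hp₃ hq₃
    refine ⟨c', h₁.trans h, h0, hm', fun i hip hiq => ?_⟩
    rw [hrest i hip hiq]
    simp [c₃, c₂, c₁, hip, hiq]

end Tuples

/-- If a generating tuple `s` has support inside a proper subset `S` of the positions, then every
generating tuple of the same length is Nielsen equivalent to it. -/
lemma nielsen_of_support {ι : Type*} [Fintype ι] [DecidableEq ι] (S : Finset ι) :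
    ∀ (A : Type*) [AddCommGroup A] (s a : ι → A) (_ : ∀ i, i ∉ S → s i = 0)
      (_ : S ≠ Finset.univ) (_ : AddSubgroup.closure (Set.range s) = ⊤)
      (_ : AddSubgroup.closure (Set.range a) = ⊤), Nielsen a s := by
  induction S using Finset.induction_on with
  | empty =>
    intro A _ s a h0 _ hs _
    have htriv : ∀ x : A, x = 0 := by
      intro x
      have hx : x ∈ AddSubgroup.closure (Set.range s) := hs ▸ AddSubgroup.mem_top x
      have hle : AddSubgroup.closure (Set.range s) ≤ ⊥ := by
        rw [AddSubgroup.closure_le]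
        rintro _ ⟨i, rfl⟩
        simp [h0 i (by simp)]
      simpa using hle hx
    have : a = s := funext fun i => (htriv _).trans (htriv _).symm
    exact this ▸ Nielsen.refl a
  | insert p S hpS ih =>
    intro A _ s a h0 hne hs ha
    obtain ⟨q, hq⟩ : ∃ q, q ∉ insert p S := by
      by_contra! h
      exact hne (Finset.eq_univ_iff_forall.mpr h)
    have hpq : p ≠ q := fun h => hq (by simp [h])
    have hsq : s q = 0 := h0 q hq
    let f := QuotientAddGroup.mk' (AddSubgroup.zmultiples (s p))
    have hmap : ∀ t : ι → A, AddSubgroup.closure (Set.range t) = ⊤ →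
        AddSubgroup.closure (Set.range fun i => f (t i)) = ⊤ := by
      intro t ht
      have : (Set.range fun i => f (t i)) = f '' Set.range t := by
        rw [← Set.range_comp]; rfl
      rw [this, ← AddMonoidHom.map_closure, ht]
      exact AddSubgroup.map_top_of_surjective f (QuotientAddGroup.mk'_surjective _)
    have hquot : Nielsen (fun i => f (a i)) (fun i => f (s i)) := by
      refine ih _ _ _ (fun i hi => ?_) (fun h => hpS (h ▸ Finset.mem_univ p)) (hmap s hs)
        (hmap a ha)
      by_cases hip : i = p
      · subst hip
        exact (QuotientAddGroup.eq_zero_iff _).mpr (AddSubgroup.mem_zmultiples _)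
      · simp [h0 i (by simp [hip, hi])]
    obtain ⟨c, hac, hc⟩ := Nielsen.lift f hquot
    have hcm : ∀ i, ∃ m : ℤ, m • s p = -c i + s i := by
      intro i
      have h := congrFun hc i
      exact AddSubgroup.mem_zmultiples_iff.mp (QuotientAddGroup.eq.mp h)
    choose m hm using hcm
    have hcp : c p = (1 - m p) • s p := by
      rw [sub_smul, hm, one_smul]; abel
    have hcq : c q = (- m q) • s p := by
      rw [neg_smul, hm, hsq]; abel
    obtain ⟨c', hcc', hq', ⟨m', hp'⟩, hrest⟩ :=
      Nielsen.euclid hpq (s p) _ _ _ le_rfl c hcp hcq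
    have hgen := hcc'.closure_eq_top (hac.closure_eq_top ha)
    obtain ⟨e, he⟩ : ∃ e : ι → ℤ, ∑ i, e i • c' i = s p := by
      rw [← Submodule.mem_span_range_iff_exists_fun ℤ, ← Submodule.mem_toAddSubgroup,
        Submodule.span_int_eq_addSubgroupClosure, hgen]
      exact AddSubgroup.mem_top _
    have hsum : c' q + ∑ t ∈ Finset.univ.erase q, e t • c' t = s p := by
      rw [← he, ← Finset.add_sum_erase _ _ (Finset.mem_univ q), hq', smul_zero]
    have h₁ := Nielsen.add_sum c' q e (Finset.univ.erase q) (by simp)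
    rw [hsum] at h₁
    have h₂ := Nielsen.add_multiples (Function.update c' q (s p)) q
      (fun i => if i = p then -m' else m i) (Finset.univ.erase q) (by simp)
    have h₃ := Nielsen.step (Function.update (Function.update s p 0) q (s p)) hpq 1
    have h₄ := Nielsen.step s hpq.symm 1
    refine hac.trans (hcc'.trans (h₁.trans (h₂.trans ?_)))
    convert h₃.trans (?_ : Nielsen _ s) using 1
    · funext i
      by_cases hiq : i = q
      · subst hiq; simp
      by_cases hip : i = p
      · subst hip; simp [hpq, hp']
      · simp [hiq, hip, hrest i hip hiq, hm]
    · convert h₄.symm using 1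
      funext i
      by_cases hiq : i = q
      · subst hiq; simp [hpq.symm, hsq]
      by_cases hip : i = p
      · subst hip; simp [hpq]
      · simp [hiq, hip]

/-- `nielsen_of_support` applied to the padding of an `r`-tuple of generators by zeros. -/
lemma nielsen_of_generates {A : Type*} [AddCommGroup A] {r d : ℕ} (s : Fin r → A)
    (hs : AddSubgroup.closure (Set.range s) = ⊤) (hd : r + 1 ≤ d) (a b : Fin d → A)
    (ha : AddSubgroup.closure (Set.range a) = ⊤)
    (hb : AddSubgroup.closure (Set.range b) = ⊤) : Nielsen a b := by
  let s' : Fin d → A := fun i => if h : (i : ℕ) < r then s ⟨i, h⟩ else 0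
  let S : Finset (Fin d) := Finset.univ.filter fun i => (i : ℕ) < r
  have h0 : ∀ i, i ∉ S → s' i = 0 := fun i hi => by
    have : ¬ (i : ℕ) < r := by simpa [S] using hi
    simp [s', this]
  have hS : S ≠ Finset.univ := fun h => by
    have : (⟨r, hd⟩ : Fin d) ∈ S := h ▸ Finset.mem_univ _
    simp [S] at this
  have hs' : AddSubgroup.closure (Set.range s') = ⊤ := by
    rw [← top_le_iff, ← hs]
    refine AddSubgroup.closure_mono ?_
    rintro _ ⟨i, rfl⟩
    exact ⟨⟨i, i.2.trans hd⟩, by simp [s']⟩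
  exact (nielsen_of_support S A s' a h0 hS hs' ha).trans
    (nielsen_of_support S A s' b h0 hS hs' hb).symm

/-! ### Monomial automorphisms of the rational function field -/

section Field

variable {k : Type} [Field k] {d : ℕ}

/-- The field `K_d` of rational functions in `d` variables. -/
abbrev RatFun (k : Type) [Field k] (d : ℕ) : Type := FractionRing (MvPolynomial (Fin d) k)

/-- The `i`-th variable, as an element of `K_d`. -/
noncomputable abbrev ratX (k : Type) [Field k] {d : ℕ} (i : Fin d) : RatFun k d :=
  algebraMap (MvPolynomial (Fin d) k) _ (MvPolynomial.X i)

lemma ratX_ne_zero (i : Fin d) : ratX k i ≠ 0 := by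
  simp [ratX]

lemma ratFun_algHom_ext {L : Type*} [Field L] [Algebra k L] {f g : RatFun k d →ₐ[k] L}
    (h : ∀ i, f (ratX k i) = g (ratX k i)) : f = g := by
  refine IsLocalization.algHom_ext (nonZeroDivisors (MvPolynomial (Fin d) k)) ?_
  exact MvPolynomial.algHom_ext fun i => h i

/-- A `d`-tuple over which all variables are algebraic is algebraically independent, since `K_d` has
transcendence degree at least `d`. -/
lemma algebraicIndependent_of_algebraic (y : Fin d → RatFun k d)
    (hy : ∀ i : Fin d, IsAlgebraic (Algebra.adjoin k (Set.range y)) (ratX k i : RatFun k d)) :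
    AlgebraicIndependent k y := by
  have halg : Algebra.IsAlgebraic (Algebra.adjoin k (Set.range y)) (RatFun k d) := by
    have hpoly : ∀ p : MvPolynomial (Fin d) k, IsAlgebraic (Algebra.adjoin k (Set.range y))
        (algebraMap (MvPolynomial (Fin d) k) (RatFun k d) p) := by
      intro p
      induction p using MvPolynomial.induction_on with
      | C c =>
        have : algebraMap (MvPolynomial (Fin d) k) (RatFun k d) (MvPolynomial.C c) =
            algebraMap (Algebra.adjoin k (Set.range y)) (RatFun k d) (algebraMap k _ c) := by
          rw [← IsScalarTower.algebraMap_apply, ← MvPolynomial.algebraMap_eq,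
            ← IsScalarTower.algebraMap_apply]
        rw [this]
        exact isAlgebraic_algebraMap _
      | add p q hp hq => rw [map_add]; exact hp.add hq
      | mul_X p i hp => rw [map_mul]; exact hp.mul (hy i)
    refine ⟨fun x => ?_⟩
    obtain ⟨p, q, _, rfl⟩ := IsFractionRing.div_surjective (A := MvPolynomial (Fin d) k) x
    rw [div_eq_mul_inv]
    exact (hpoly p).mul (hpoly q).inv
  have hX : AlgebraicIndependent k (ratX k : Fin d → RatFun k d) :=
    (MvPolynomial.algebraicIndependent_X (Fin d) k).map'
      (f := IsScalarTower.toAlgHom k (MvPolynomial (Fin d) k) (RatFun k d))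
      (IsFractionRing.injective _ _)
  exact (Algebra.IsAlgebraic.isTranscendenceBasis_of_le_trdeg_of_finite k y hX.cardinalMk_le_trdeg).1

/-- The tuple obtained from the variables by replacing `Xᵢ` with `Xᵢ * Xⱼ ^ m`. -/
noncomputable def shearTuple (k : Type) [Field k] {d : ℕ} (i j : Fin d) (m : ℤ) :
    Fin d → RatFun k d :=
  Function.update (ratX k) i (ratX k i * ratX k j ^ m)

lemma isAlgebraic_zpow {R L : Type*} [CommRing R] [IsDomain R] [Field L] [Algebra R L] {x : L}
    (hx : IsAlgebraic R x) (m : ℤ) : IsAlgebraic R (x ^ m) := by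
  cases m with
  | ofNat n => simpa using hx.pow n
  | negSucc n => simpa [zpow_negSucc] using (hx.pow (n + 1)).inv

lemma shearTuple_algebraicIndependent {i j : Fin d} (hij : i ≠ j) (m : ℤ) :
    AlgebraicIndependent k (shearTuple k i j m) := by
  apply algebraicIndependent_of_algebraic
  have hmem : ∀ l, IsAlgebraic (Algebra.adjoin k (Set.range (shearTuple k i j m)))
      (shearTuple k i j m l) := fun l =>
    isAlgebraic_algebraMap (A := RatFun k d)
      (⟨_, Algebra.subset_adjoin ⟨l, rfl⟩⟩ :
        Algebra.adjoin k (Set.range (shearTuple k i j m)))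
  intro l
  by_cases hl : l = i
  · subst hl
    have hj : shearTuple k l j m j = ratX k j := by simp [shearTuple, hij.symm]
    have h := (hmem l).mul (isAlgebraic_zpow (hj ▸ hmem j) (-m))
    have h0 : ratX k j ^ m ≠ 0 := zpow_ne_zero _ (ratX_ne_zero j)
    have heq : shearTuple k l j m l * ratX k j ^ (-m) = ratX k l := by
      rw [shearTuple, Function.update_self, zpow_neg, mul_assoc, mul_inv_cancel₀ h0, mul_one]
    rwa [heq] at h
  · have h := hmem l
    have heq : shearTuple k i j m l = ratX k l := by rw [shearTuple, Function.update_of_ne hl]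
    rwa [heq] at h

/-- The endomorphism `Xᵢ ↦ Xᵢ * Xⱼ ^ m` of `K_d` fixing the other variables. -/
noncomputable def shearHom {i j : Fin d} (hij : i ≠ j) (m : ℤ) : RatFun k d →ₐ[k] RatFun k d :=
  IsFractionRing.liftAlgHom (g := MvPolynomial.aeval (shearTuple k i j m))
    (algebraicIndependent_iff_injective_aeval.mp (shearTuple_algebraicIndependent hij m))

lemma shearHom_X {i j : Fin d} (hij : i ≠ j) (m : ℤ) (l : Fin d) :
    shearHom hij m (ratX k l) = shearTuple k i j m l := by
  rw [shearHom, IsFractionRing.liftAlgHom_apply, IsFractionRing.lift_algebraMap]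
  exact MvPolynomial.aeval_X _ _

lemma shearHom_comp {i j : Fin d} (hij : i ≠ j) (m n : ℤ) (hmn : m + n = 0) :
    (shearHom hij m).comp (shearHom hij n) = AlgHom.id k (RatFun k d) := by
  apply ratFun_algHom_ext
  intro l
  rw [AlgHom.comp_apply, shearHom_X, AlgHom.id_apply]
  by_cases hl : l = i
  · subst hl
    rw [shearTuple, Function.update_self, map_mul, map_zpow₀, shearHom_X, shearHom_X, shearTuple,
      Function.update_self, Function.update_of_ne hij.symm, mul_assoc,
      ← zpow_add₀ (ratX_ne_zero j), hmn, zpow_zero, mul_one]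
  · rw [shearTuple, Function.update_of_ne hl, shearHom_X, shearTuple, Function.update_of_ne hl]

/-- The monomial automorphism `Xᵢ ↦ Xᵢ * Xⱼ ^ m` of `K_d` fixing the other variables. -/
noncomputable def shear {i j : Fin d} (hij : i ≠ j) (m : ℤ) : RatFun k d ≃ₐ[k] RatFun k d :=
  AlgEquiv.ofAlgHom (shearHom hij m) (shearHom hij (-m))
    (shearHom_comp hij _ _ (by simp)) (shearHom_comp hij _ _ (by simp))

lemma shear_X {i j : Fin d} (hij : i ≠ j) (m : ℤ) (l : Fin d) :
    shear hij m (ratX k l) = shearTuple k i j m l :=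
  shearHom_X hij m l

/-! ### Intertwining automorphisms -/

variable {A : Type*} [AddCommGroup A]

/-- `ρ` acts on the variables as the character `g` does in the representation with characters
`a`. -/
def ActsBy (a : Fin d → A) (g : A →+ Additive kˣ) (ρ : RatFun k d ≃ₐ[k] RatFun k d) : Prop :=
  ∀ i, ρ (ratX k i) =
    algebraMap k (RatFun k d) ((Additive.toMul (g (a i)) : kˣ) : k) * ratX k i

/-- `Φ` carries the representation with characters `a` to that with characters `b`: whenever `ρ`
acts as `g` does for `b`, the conjugate `Φ⁻¹ ρ Φ` acts as `g` does for `a`. -/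
def Intertwines (a b : Fin d → A) (Φ : RatFun k d ≃ₐ[k] RatFun k d) : Prop :=
  ∀ g ρ, ActsBy b g ρ → ActsBy a g ((Φ.trans ρ).trans Φ.symm)

lemma intertwines_of_step {a b : Fin d → A} (h : ElemStep a b) :
    ∃ Φ : RatFun k d ≃ₐ[k] RatFun k d, Intertwines a b Φ := by
  obtain ⟨i, j, hij, n, rfl⟩ := h
  refine ⟨shear hij (-n), fun g ρ hρ l => ?_⟩
  rw [AlgEquiv.trans_apply, AlgEquiv.trans_apply, AlgEquiv.symm_apply_eq, map_mul,
    AlgEquiv.commutes, shear_X]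
  by_cases hl : l = i
  · subst hl
    have hj := hρ j
    have hl := hρ l
    rw [Function.update_of_ne hij.symm] at hj
    rw [Function.update_self] at hl
    have hu : algebraMap k (RatFun k d) ((Additive.toMul (g (a j)) : kˣ) : k) ≠ 0 := by simp
    rw [shearTuple, Function.update_self, map_mul, map_zpow₀, hj, hl, mul_zpow, map_add, map_zsmul,
      toMul_add, toMul_zsmul, Units.val_mul, Units.val_zpow_eq_zpow_val, map_mul, map_zpow₀,
      zpow_neg, zpow_neg]
    field_simp
  · have := hρ l
    rw [Function.update_of_ne hl] at this
    rw [shearTuple, Function.update_of_ne hl, this]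

lemma intertwines_of_nielsen {a b : Fin d → A} (h : Nielsen a b) :
    ∃ Φ : RatFun k d ≃ₐ[k] RatFun k d, Intertwines a b Φ := by
  induction h with
  | refl => exact ⟨AlgEquiv.refl, fun g ρ hρ => hρ⟩
  | tail _ h ih =>
    obtain ⟨Φ, hΦ⟩ := ih
    obtain ⟨Ψ, hΨ⟩ := intertwines_of_step (k := k) h
    exact ⟨Φ.trans Ψ, fun g ρ hρ => hΦ g _ (hΨ g ρ hρ)⟩

end Field


/-- If the abelian group `A` is generated by `r` elements and `d ≥ r + 1`, then
for any two generating `d`-tuples `a`, `b` of `A` and the corresponding actions of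
`G = Hom(A, kˣ)` on `K_d = Frac(k[X₁, …, X_d])` (with `g : Xᵢ ↦ g(aᵢ)·Xᵢ`, resp.
`g : Xᵢ ↦ g(bᵢ)·Xᵢ`), some `k`-algebra automorphism `Φ` of `K_d` intertwines the two actions:
any two faithful `d`-dimensional representations of a diagonalizable group of rank `r` are
birationally equivalent when `d ≥ r + 1`. -/
theorem birational_of_dim_gt_rank {k : Type} [Field k] [IsAlgClosed k] [CharZero k]
    {A : Type*} [AddCommGroup A] {r d : ℕ}
    (s : Fin r → A) (hs : AddSubgroup.closure (Set.range s) = ⊤) (hd : r + 1 ≤ d)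
    (a b : Fin d → A)
    (ha : AddSubgroup.closure (Set.range a) = ⊤)
    (hb : AddSubgroup.closure (Set.range b) = ⊤)
    (ρa ρb : (A →+ Additive kˣ) →
      (FractionRing (MvPolynomial (Fin d) k) ≃ₐ[k] FractionRing (MvPolynomial (Fin d) k)))
    (hρa_act : ∀ g g' x, ρa (g + g') x = ρa g (ρa g' x))
    (hρb_act : ∀ g g' x, ρb (g + g') x = ρb g (ρb g' x))
    (hρa : ∀ g i, ρa g (algebraMap (MvPolynomial (Fin d) k) _ (MvPolynomial.X i)) =
      algebraMap (MvPolynomial (Fin d) k) _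
        (MvPolynomial.C ((Additive.toMul (g (a i)) : kˣ) : k) * MvPolynomial.X i))
    (hρb : ∀ g i, ρb g (algebraMap (MvPolynomial (Fin d) k) _ (MvPolynomial.X i)) =
      algebraMap (MvPolynomial (Fin d) k) _
        (MvPolynomial.C ((Additive.toMul (g (b i)) : kˣ) : k) * MvPolynomial.X i)) :
    ∃ Φ : FractionRing (MvPolynomial (Fin d) k) ≃ₐ[k] FractionRing (MvPolynomial (Fin d) k),
      ∀ g x, Φ (ρa g x) = ρb g (Φ x) := by
  obtain ⟨Φ, hΦ⟩ := intertwines_of_nielsen (k := k) (nielsen_of_generates s hs hd a b ha hb)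
  have hC : ∀ c : k, algebraMap (MvPolynomial (Fin d) k) (RatFun k d) (MvPolynomial.C c) =
      algebraMap k (RatFun k d) c := fun c => by
    rw [← MvPolynomial.algebraMap_eq, ← IsScalarTower.algebraMap_apply]
  refine ⟨Φ, fun g x => ?_⟩
  have hb' : ActsBy b g (ρb g) := fun i => by rw [ratX, hρb, map_mul, hC]
  have ha' : ActsBy a g (ρa g) := fun i => by rw [ratX, hρa, map_mul, hC]
  have heq : (ρa g : RatFun k d →ₐ[k] RatFun k d) = ((Φ.trans (ρb g)).trans Φ.symm :) :=
    ratFun_algHom_ext fun i => (ha' i).trans (hΦ g _ hb' i).symm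
  have hx := DFunLike.congr_fun heq x
  exact (AlgEquiv.eq_symm_apply Φ).mp hx
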